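/- arXiv:1712.00388 — 5 statements merged into one kernel-verified Lean document; each statement's English description precedes it below -/
import Mathlib

section
/- Let n ≥ 1 and let S = (s_{ij}) be a real n×n upper triangular matrix with s_{ii} = 1 and s_{ij} = 0 for i > j. For each j ∈ {1,…,n} define n×n matrices A_j and B_j as follows: A_j agrees with the identity matrix outside row j, and row j of A_j has entries s_{1j},…,s_{j−1,j} in columns 1,…,j−1, entry 1 in column j, and entries −s_{j,j+1},…,−s_{j,n} in columns j+1,…,n; B_j agrees with the identity outside row j, and row j of B_j has entries −s_{1j},…,−s_{j−1,j} in columns 1,…,j−1, entry −1 in column j, and entries −s_{j,j+1},…,−s_{j,n} in columns j+1,…,n. Then S⁻¹Sᵀ = A_1·A_2·⋯·A_n and −S⁻¹Sᵀ = B_1·B_2·⋯·B_n. -/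
open Matrix

/-!
The product `∏ⱼ (1 - Eⱼⱼ (S - L))`, with `S` upper unitriangular and `L` lower triangular, is a
backward Gauss–Seidel sweep for `S - L`: the factor with index `j` replaces `xⱼ` by the solution
of the `j`-th equation of `S x' = L x`, using the coordinates of `x'` found so far. Hence the
product is `S⁻¹ L`; the two factorizations are the cases `L = Sᵀ` and `L = -Sᵀ`. Only the relations
`eⱼ U eᵢ = 0` (`i ≤ j`) and `eᵢ N eⱼ = 0` (`i < j`) for `S = 1 + U`, `L = 1 + N`, `eⱼ = Eⱼⱼ` matter,
together with `∑ⱼ eⱼ = 1`, so the identity `S ∏ⱼ (1 - eⱼ (S - L)) = L` holds in any ring.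
-/

section Ring

variable {R ι : Type*} [Ring R]

theorem mul_prod_map_one_sub_eq_self {a : R} {e : ι → R} {l : List ι}
    (h : ∀ j ∈ l, a * e j = 0) (v : R) : a * (l.map fun j ↦ 1 - e j * v).prod = a := by
  induction l with
  | nil => simp
  | cons k l ih =>
    rw [List.forall_mem_cons] at h
    rw [List.map_cons, List.prod_cons, ← mul_assoc, mul_sub, ← mul_assoc, h.1, zero_mul, mul_one,
      sub_zero, ih h.2]

theorem one_add_sum_mul_mul_prod_one_sub [Preorder ι] {e : ι → R} {U N : R}
    (hU : ∀ i j, i ≤ j → e j * U * e i = 0) (hN : ∀ i j, i < j → e i * N * e j = 0)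
    {l : List ι} (hl : l.Pairwise (· < ·)) :
    (1 + (l.map e).sum * U) * (l.map fun j ↦ 1 - e j * (U - N)).prod =
      1 + (l.map e).sum * N := by
  induction l with
  | nil => simp
  | cons k l ih =>
    rw [List.pairwise_cons] at hl
    obtain ⟨hk, hl⟩ := hl
    simp only [List.map_cons, List.sum_cons, List.prod_cons]
    set P := (l.map e).sum with hP
    set Q := (l.map fun j ↦ 1 - e j * (U - N)).prod
    have hPUe : P * U * e k = 0 := by
      rw [hP, mul_assoc, ← List.sum_map_mul_right]
      refine List.sum_eq_zero fun x hx ↦ ?_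
      obtain ⟨j, hj, rfl⟩ := List.mem_map.mp hx
      rw [← mul_assoc, hU k j (hk j hj).le]
    have hNQ : e k * N * Q = e k * N :=
      mul_prod_map_one_sub_eq_self (fun j hj ↦ hN k j (hk j hj)) _
    have hfactor : (1 + (e k + P) * U) * (1 - e k * (U - N)) = 1 + P * U + e k * N := by
      calc (1 + (e k + P) * U) * (1 - e k * (U - N))
          = 1 + P * U + e k * N - (e k * U * e k + P * U * e k) * (U - N) := by noncomm_ring
        _ = 1 + P * U + e k * N := by rw [hU k k le_rfl, hPUe, add_zero, zero_mul, sub_zero]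
    calc (1 + (e k + P) * U) * ((1 - e k * (U - N)) * Q)
        = (1 + P * U) * Q + e k * N * Q := by rw [← mul_assoc, hfactor, add_mul]
      _ = 1 + (e k + P) * N := by rw [ih hl, hNQ, add_mul, add_assoc, add_comm (P * N)]

end Ring

section PseudoReflection

variable {R ι : Type*} [Fintype ι]

/-- The matrix of the pseudo-reflection `c ↦ c - I(eⱼ, c) eⱼ`, where the bilinear form `I` has
matrix `V`; the Picard–Lefschetz transformations are the cases `V = S - Sᵀ` and `V = S + Sᵀ`. -/
def pseudoReflection [Ring R] [DecidableEq ι] (V : Matrix ι ι R) (j : ι) : Matrix ι ι R :=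
  1 - single j j 1 * V

variable [LinearOrder ι]

theorem pseudoReflection_sub_apply [Ring R] {S L : Matrix ι ι R} (hS : S.IsUpperTriangular)
    (hdiag : ∀ i, S i i = 1) (hL : L.IsLowerTriangular) (j i l : ι) :
    pseudoReflection (S - L) j i l =
      if i = j then (if l < j then L j l else if l = j then L j j else -S j l)
      else if i = l then 1 else 0 := by
  by_cases hij : i = j
  · subst hij
    rcases lt_trichotomy l i with h | rfl | h
    · simp [pseudoReflection, h, h.ne', hS h]
    · simp [pseudoReflection, hdiag]
    · simp [pseudoReflection, h.ne, h.ne', h.not_gt, hL h]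
  · simp [pseudoReflection, hij, one_apply]

theorem mul_prod_map_pseudoReflection_sub [Ring R] {S L : Matrix ι ι R}
    (hS : S.IsUpperTriangular) (hdiag : ∀ i, S i i = 1) (hL : L.IsLowerTriangular)
    {l : List ι} (hl : l.Pairwise (· < ·)) (hmem : ∀ i, i ∈ l) :
    S * (l.map (pseudoReflection (S - L))).prod = L := by
  have hsum : (l.map fun i ↦ single i i (1 : R)).sum = 1 := by
    have huniv : l.toFinset = Finset.univ :=
      Finset.eq_univ_of_forall fun i ↦ List.mem_toFinset.mpr (hmem i)
    rw [← List.sum_toFinset _ hl.nodup, huniv, sum_single_one]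
  have hU : ∀ i j, i ≤ j → single j j 1 * (S - 1) * single i i 1 = 0 := by
    intro i j hij
    rcases hij.eq_or_lt with rfl | hij
    · simp [hdiag]
    · simp [hS hij, hij.ne']
  have hN : ∀ i j, i < j → single i i 1 * (L - 1) * single j j 1 = 0 := by
    intro i j hij
    simp [hL hij, hij.ne]
  have h := one_add_sum_mul_mul_prod_one_sub hU hN hl
  rw [hsum, one_mul, one_mul, add_sub_cancel, add_sub_cancel, sub_sub_sub_cancel_right] at h
  exact h

end PseudoReflection

theorem prod_ofFn_pseudoReflection_sub {R : Type*} [CommRing R] {n : ℕ}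
    {S L : Matrix (Fin n) (Fin n) R} (hS : S.IsUpperTriangular) (hdiag : ∀ i, S i i = 1)
    (hL : L.IsLowerTriangular) :
    (List.ofFn (pseudoReflection (S - L))).prod = S⁻¹ * L := by
  have hdet : IsUnit S.det := by simp [det_of_isUpperTriangular hS, hdiag]
  have hmul : S * (List.ofFn (pseudoReflection (S - L))).prod = L := by
    rw [List.ofFn_eq_map]
    exact mul_prod_map_pseudoReflection_sub hS hdiag hL (List.pairwise_lt_finRange n)
      List.mem_finRange
  rw [← nonsing_inv_mul_cancel_left S (List.ofFn _).prod hdet, hmul]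

theorem stmt2_general {R : Type*} [CommRing R] {n : ℕ} {S : Matrix (Fin n) (Fin n) R}
    (hdiag : ∀ i, S i i = 1) (hlow : ∀ i j : Fin n, j < i → S i j = 0)
    {A B : Fin n → Matrix (Fin n) (Fin n) R}
    (hA : ∀ j i l, A j i l =
      if i = j then (if l < j then S l j else if l = j then 1 else - S j l)
      else (if i = l then 1 else 0))
    (hB : ∀ j i l, B j i l =
      if i = j then (if l < j then - S l j else if l = j then -1 else - S j l)
      else (if i = l then 1 else 0)) :
    S⁻¹ * Sᵀ = (List.ofFn A).prod ∧ - (S⁻¹ * Sᵀ) = (List.ofFn B).prod := by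
  have hS : S.IsUpperTriangular := fun i j hij ↦ hlow i j hij
  have hA' : A = pseudoReflection (S - Sᵀ) := by
    ext j i l
    simp [hA, pseudoReflection_sub_apply hS hdiag hS.transpose, hdiag]
  have hB' : B = pseudoReflection (S - -Sᵀ) := by
    ext j i l
    simp only [hB, pseudoReflection_sub_apply hS hdiag hS.transpose.neg, Matrix.neg_apply,
      transpose_apply, hdiag]
  rw [hA', hB', prod_ofFn_pseudoReflection_sub hS hdiag hS.transpose,
    prod_ofFn_pseudoReflection_sub hS hdiag hS.transpose.neg, Matrix.mul_neg]
  exact ⟨rfl, rfl⟩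

/-- Picard–Lefschetz factorization of `S⁻¹ Sᵀ`: for an upper triangular `S` with
`1`'s on the diagonal, `S⁻¹ Sᵀ` is the product of the pseudo-reflection matrices
`A_1 ⋯ A_n` and `-S⁻¹ Sᵀ` is the product of the reflection matrices `B_1 ⋯ B_n`. -/
theorem stmt2 (n : ℕ) (hn : 1 ≤ n) (S : Matrix (Fin n) (Fin n) ℝ)
    (hdiag : ∀ i, S i i = 1) (hlow : ∀ i j : Fin n, j < i → S i j = 0)
    (A B : Fin n → Matrix (Fin n) (Fin n) ℝ)
    (hA : ∀ j i l, A j i l =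
      if i = j then (if l < j then S l j else if l = j then 1 else - S j l)
      else (if i = l then 1 else 0))
    (hB : ∀ j i l, B j i l =
      if i = j then (if l < j then - S l j else if l = j then -1 else - S j l)
      else (if i = l then 1 else 0)) :
    S⁻¹ * Sᵀ = (List.ofFn A).prod ∧ - (S⁻¹ * Sᵀ) = (List.ofFn B).prod :=
  stmt2_general hdiag hlow hA hB
end

section
/- Let n ≥ 1, k ∈ {1,2}, and let p(x) = xⁿ + p_{n−1}x^{n−1} + ⋯ + p_1x + p_0 ∈ ℝ[x] be monic with coefficients satisfying p_{n−j} = (−1)^{k−1}·p_j for all 0 ≤ j ≤ n (in particular p_0 = (−1)^{k−1}, where p_n := 1). Let S be the upper triangular n×n matrix with S_{ii} = 1, S_{ij} = p_{n−(j−i)} for i < j and S_{ij} = 0 for i > j, and let R be the companion matrix of p (first row (−p_{n−1},…,−p_0), R_{i+1,i} = 1 for 1 ≤ i ≤ n−1, other entries 0). Then (−1)^k·S⁻¹Sᵀ = Rⁿ. -/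
open Matrix

/-!
Write `p = ∑ j ≤ n, c j xʲ`. On row vectors, `R` is multiplication by `x` modulo `p` in the basis
`xⁿ⁻¹, …, x, 1`, and row `i` of `S` is the polynomial part `qᵢ` of `p / xⁱ⁺¹`. Modulo `p`,
`xⁿ qᵢ = xⁿ⁻¹⁻ⁱ (xⁱ⁺¹ qᵢ) ≡ -xⁿ⁻¹⁻ⁱ (c 0 + ⋯ + c i xⁱ)`, so `S Rⁿ` is minus the lower triangular
Toeplitz matrix of `c 0, c 1, …`, which the coefficient symmetry identifies with a multiple of `Sᵀ`.
-/

section UpperToeplitz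

variable {K : Type*}

/-- The upper triangular `n × n` Toeplitz matrix with entry `a d` on the `d`-th superdiagonal.
The matrix `S(p)` is the one for `a d = p_{n-d}`. -/
def upperToeplitz [Zero K] (n : ℕ) (a : ℕ → K) : Matrix (Fin n) (Fin n) K :=
  of fun i j => if i ≤ j then a (j - i) else 0

theorem upperToeplitz_apply [Zero K] {n : ℕ} (a : ℕ → K) (i j : Fin n) :
    upperToeplitz n a i j = if i ≤ j then a (j - i) else 0 :=
  rfl

theorem det_upperToeplitz [CommRing K] (n : ℕ) (a : ℕ → K) :
    (upperToeplitz n a).det = a 0 ^ n := by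
  have htri : (upperToeplitz n a).IsUpperTriangular := fun _ _ hji => if_neg (not_le.mpr hji)
  simp [det_of_isUpperTriangular htri, upperToeplitz_apply]

theorem upperToeplitz_eq_smul [MulZeroClass K] {n : ℕ} {ε : K} {a b : ℕ → K}
    (h : ∀ d < n, a d = ε * b d) : upperToeplitz n a = ε • upperToeplitz n b := by
  ext i j
  simp only [Matrix.smul_apply, upperToeplitz_apply, smul_eq_mul, mul_ite, mul_zero]
  rw [h _ (by omega)]

end UpperToeplitz

section MonomialRow

/-- The coordinates of `xᵐ` in the basis `xⁿ⁻¹, …, x, 1`; the zero vector if `m ≥ n`. -/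
def monomialRow (K : Type*) [Zero K] [One K] (n m : ℕ) : Fin n → K :=
  fun l => if l + m + 1 = n then 1 else 0

variable {K : Type*} [Semiring K] {n : ℕ}

theorem monomialRow_vecMul {ι : Type*} {m : ℕ} (hm : m < n) (A : Matrix (Fin n) ι K) :
    monomialRow K n m ᵥ* A = A ⟨n - 1 - m, by omega⟩ := by
  have hsingle : monomialRow K n m = Pi.single ⟨n - 1 - m, by omega⟩ 1 := by
    ext l
    simp only [monomialRow, Pi.single_apply, Fin.ext_iff]
    exact if_congr (by omega) rfl rfl
  rw [hsingle, single_one_vecMul]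
  rfl

theorem sum_smul_monomialRow_apply (s : Finset ℕ) (e : ℕ → ℕ) (a : ℕ → K) (l : Fin n) :
    (∑ j ∈ s, a j • monomialRow K n (e j)) l = ∑ j ∈ s with l + e j + 1 = n, a j := by
  simp [Finset.sum_apply, Finset.sum_filter, monomialRow]

theorem upperToeplitz_reverse_row (a : ℕ → K) (i : Fin n) :
    upperToeplitz n (fun d => a (n - d)) i =
      ∑ j ∈ Finset.Ico (i + 1 : ℕ) (n + 1), a j • monomialRow K n (j - (i + 1)) := by
  ext l
  rw [sum_smul_monomialRow_apply, upperToeplitz_apply]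
  split_ifs with hil
  · have hfilter : {j ∈ Finset.Ico (i + 1 : ℕ) (n + 1) | l + (j - (i + 1)) + 1 = n} =
        {n - (l - i : ℕ)} := by
      grind
    rw [hfilter, Finset.sum_singleton]
  · rw [Finset.filter_false_of_mem (by grind), Finset.sum_empty]

theorem upperToeplitz_transpose_row (a : ℕ → K) (i : Fin n) :
    (upperToeplitz n a)ᵀ i =
      ∑ j ∈ Finset.range (i + 1), a j • monomialRow K n (j + (n - (i + 1))) := by
  ext l
  rw [sum_smul_monomialRow_apply, transpose_apply, upperToeplitz_apply]
  split_ifs with hli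
  · have hfilter : {j ∈ Finset.range (i + 1) | l + (j + (n - (i + 1))) + 1 = n} =
        {(i - l : ℕ)} := by
      grind
    rw [hfilter, Finset.sum_singleton]
  · rw [Finset.filter_false_of_mem (by grind), Finset.sum_empty]

end MonomialRow

section Companion

variable {K : Type*} [Ring K]

/-- The companion matrix of the monic polynomial `xⁿ + c (n-1) xⁿ⁻¹ + ⋯ + c 0`, with the
coefficients in the first row and ones below the diagonal. -/
def companionMatrix (n : ℕ) (c : ℕ → K) : Matrix (Fin n) (Fin n) K :=
  of fun i l =>
    if (i : ℕ) = 0 then -c (n - 1 - l) else if (i : ℕ) = l + 1 then 1 else 0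

/-- The coordinates of `xᵐ` modulo `xⁿ + c (n-1) xⁿ⁻¹ + ⋯ + c 0` in the basis `xⁿ⁻¹, …, x, 1`,
obtained by letting the companion matrix act `m` times on the row of the constant `1`. -/
def powerRow (n : ℕ) (c : ℕ → K) (m : ℕ) : Fin n → K :=
  monomialRow K n 0 ᵥ* companionMatrix n c ^ m

variable {n : ℕ} {c : ℕ → K}

theorem powerRow_vecMul_pow (m k : ℕ) :
    powerRow n c m ᵥ* companionMatrix n c ^ k = powerRow n c (m + k) := by
  rw [powerRow, powerRow, vecMul_vecMul, pow_add]

theorem powerRow_succ (m : ℕ) :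
    powerRow n c (m + 1) = powerRow n c m ᵥ* companionMatrix n c := by
  rw [← powerRow_vecMul_pow, pow_one]

theorem powerRow_eq_monomialRow {m : ℕ} (hm : m < n) : powerRow n c m = monomialRow K n m := by
  induction m with
  | zero => rw [powerRow, pow_zero, vecMul_one]
  | succ m ih =>
    rw [powerRow_succ, ih (by omega), monomialRow_vecMul (by omega)]
    ext l
    simp only [companionMatrix, monomialRow, of_apply]
    rw [if_neg (by omega)]
    exact if_congr (by omega) rfl rfl

theorem powerRow_self_eq_neg_sum :
    powerRow n c n = -∑ j ∈ Finset.range n, c j • monomialRow K n j := by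
  ext l
  obtain ⟨m, rfl⟩ := Nat.exists_eq_add_one.mpr l.pos
  have hfilter : {j ∈ Finset.range (m + 1) | l + j + 1 = m + 1} = {m - (l : ℕ)} := by
    grind
  rw [Pi.neg_apply, sum_smul_monomialRow_apply, hfilter, Finset.sum_singleton,
    powerRow_succ, powerRow_eq_monomialRow (by omega), monomialRow_vecMul (by omega)]
  simp [companionMatrix]

theorem sum_smul_powerRow_add_eq_zero (hcn : c n = 1) (m : ℕ) :
    ∑ j ∈ Finset.range (n + 1), c j • powerRow n c (j + m) = 0 := by
  have hlow : ∑ j ∈ Finset.range n, c j • powerRow n c j =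
      ∑ j ∈ Finset.range n, c j • monomialRow K n j :=
    Finset.sum_congr rfl fun j hj => by rw [powerRow_eq_monomialRow (Finset.mem_range.mp hj)]
  have hzero : ∑ j ∈ Finset.range (n + 1), c j • powerRow n c j = 0 := by
    rw [Finset.sum_range_succ, hcn, one_smul, powerRow_self_eq_neg_sum, hlow, add_neg_cancel]
  simpa only [sum_vecMul, smul_vecMul, powerRow_vecMul_pow, zero_vecMul] using
    congrArg (· ᵥ* companionMatrix n c ^ m) hzero

theorem upperToeplitz_reverse_mul_companionMatrix_pow (hcn : c n = 1) :
    upperToeplitz n (fun d => c (n - d)) * companionMatrix n c ^ n = -(upperToeplitz n c)ᵀ := by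
  refine funext fun i => ?_
  calc (upperToeplitz n (fun d => c (n - d)) * companionMatrix n c ^ n) i
      = ∑ j ∈ Finset.Ico (i + 1 : ℕ) (n + 1),
          c j • (monomialRow K n (j - (i + 1)) ᵥ* companionMatrix n c ^ n) := by
        simp only [mul_apply_eq_vecMul, upperToeplitz_reverse_row, sum_vecMul, smul_vecMul]
    _ = ∑ j ∈ Finset.Ico (i + 1 : ℕ) (n + 1), c j • powerRow n c (j + (n - (i + 1))) := by
        refine Finset.sum_congr rfl fun j hj => ?_
        rw [← powerRow_eq_monomialRow (c := c) (by grind), powerRow_vecMul_pow,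
          show j - (i + 1) + n = j + (n - (i + 1)) by grind]
    _ = -∑ j ∈ Finset.range (i + 1), c j • powerRow n c (j + (n - (i + 1))) := by
        rw [eq_neg_iff_add_eq_zero, add_comm, Finset.sum_range_add_sum_Ico _ (by omega),
          sum_smul_powerRow_add_eq_zero hcn]
    _ = -∑ j ∈ Finset.range (i + 1), c j • monomialRow K n (j + (n - (i + 1))) := by
        refine congrArg Neg.neg (Finset.sum_congr rfl fun j hj => ?_)
        rw [powerRow_eq_monomialRow (by grind)]
    _ = (-(upperToeplitz n c)ᵀ) i := by
        rw [← upperToeplitz_transpose_row]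
        rfl

end Companion

theorem stmt5_general {K : Type*} [CommRing K] (n : ℕ) (ε : K)
    (c : ℕ → K) (hcn : c n = 1) (hsym : ∀ j ≤ n, c (n - j) = ε * c j)
    (S R : Matrix (Fin n) (Fin n) K)
    (hS : ∀ i j : Fin n, S i j =
      if i = j then 1 else if i < j then c (n - ((j : ℕ) - (i : ℕ))) else 0)
    (hR : ∀ i l : Fin n, R i l =
      if (i : ℕ) = 0 then - c (n - 1 - (l : ℕ))
      else if (i : ℕ) = (l : ℕ) + 1 then 1 else 0) :
    (-ε) • (S⁻¹ * Sᵀ) = R ^ n := by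
  have hS' : S = upperToeplitz n fun d => c (n - d) := by
    ext i j
    rw [hS, upperToeplitz_apply]
    grind
  have hR' : R = companionMatrix n c := Matrix.ext hR
  have hdet : IsUnit S.det := by simp [hS', det_upperToeplitz, hcn]
  have hε : ε * ε = 1 := by
    have h₀ : c 0 = ε := by simpa [hcn] using hsym n le_rfl
    simpa [hcn, h₀] using (hsym 0 n.zero_le).symm
  have hST : S = ε • upperToeplitz n c := by
    rw [hS', upperToeplitz_eq_smul fun d hd => hsym d hd.le]
  have hmul : S * R ^ n = (-ε) • Sᵀ := by
    rw [hS', hR', upperToeplitz_reverse_mul_companionMatrix_pow hcn, ← hS', hST, transpose_smul,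
      smul_smul, neg_mul, hε, neg_one_smul]
  rw [← Matrix.mul_smul, ← hmul, nonsing_inv_mul_cancel_left _ _ hdet]

/-- For a monic real polynomial `p` of degree `n` with (anti-)palindromic
coefficients `c (n-j) = (-1)^(k-1) c j`, the HOR-matrix `S` (upper triangular,
`S i j = c (n - (j - i))` above the diagonal) and the companion matrix `R` of
`p` satisfy `(-1)^k • (S⁻¹ Sᵀ) = Rⁿ`. -/
theorem stmt5 (n : ℕ) (hn : 1 ≤ n) (k : ℕ) (hk : k = 1 ∨ k = 2)
    (c : ℕ → ℝ) (hcn : c n = 1)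
    (hsym : ∀ j ≤ n, c (n - j) = (-1 : ℝ)^(k - 1) * c j)
    (S R : Matrix (Fin n) (Fin n) ℝ)
    (hS : ∀ i j : Fin n, S i j =
      if i = j then 1 else if i < j then c (n - ((j : ℕ) - (i : ℕ))) else 0)
    (hR : ∀ i l : Fin n, R i l =
      if (i : ℕ) = 0 then - c (n - 1 - (l : ℕ))
      else if (i : ℕ) = (l : ℕ) + 1 then 1 else 0) :
    ((-1 : ℝ)^k) • (S⁻¹ * Sᵀ) = R ^ n := by
  rcases hk with rfl | rfl <;> simpa using stmt5_general n _ c hcn hsym S R hS hR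
end

section
/- Let p ∈ ℝ[x] be monic of degree n ≥ 1 with coefficients satisfying p_j = ε·p_{n−j} for all 0 ≤ j ≤ n, where ε ∈ {1,−1} and p_n := 1 (equivalently, xⁿ·p(1/x) = ε·p(x)). Then the multiplicity of 1 as a root of p is even if ε = 1 and odd if ε = −1. -/
/-!
The coefficient symmetry says `p = ε · xⁿ p(1/x)`. Reversal turns `(x - 1)ᵐ` into
`(1 - x)ᵐ = (-1)ᵐ (x - 1)ᵐ`, so if `p = (x - 1)ᵐ q` then `q` has the same symmetry with sign
`(-1)ᵐ ε`. Reversal does not change the value at `1`, hence `q(1) = (-1)ᵐ ε q(1)`; when `m` is the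
multiplicity of the root `1`, we have `q(1) ≠ 0`, and the sign must be `1`.
-/

section

open Polynomial

section Semiring

variable {R : Type*} [Semiring R]

theorem reflect_pow {f : R[X]} {d : ℕ} (hf : f.natDegree ≤ d) (m : ℕ) :
    reflect (m * d) (f ^ m) = reflect d f ^ m := by
  induction m with
  | zero => simp
  | succ m ih =>
    rw [pow_succ, pow_succ, add_one_mul, reflect_mul _ _ (natDegree_pow_le_of_le m hf) hf, ih]

theorem eq_C_mul_reflect_of_coeff_eq {p : R[X]} {n : ℕ} {ε : R} (hdeg : p.natDegree ≤ n)
    (hsym : ∀ j ≤ n, p.coeff j = ε * p.coeff (n - j)) : p = C ε * reflect n p := by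
  ext j
  rw [coeff_C_mul, coeff_reflect]
  rcases le_or_gt j n with hj | hj
  · rw [revAt_le hj, hsym j hj]
  · rw [revAt_eq_self_of_lt hj, coeff_eq_zero_of_natDegree_lt (hdeg.trans_lt hj), mul_zero]

end Semiring

theorem eval_one_reflect {R : Type*} [CommSemiring R] {q : R[X]} {k : ℕ}
    (hq : q.natDegree ≤ k) : (reflect k q).eval 1 = q.eval 1 := by
  let : Invertible (1 : R) := invertibleOne
  simpa [eval₂_id] using eval₂_reflect_mul_pow (RingHom.id R) 1 k q hq

theorem reflect_X_sub_C_pow {R : Type*} [Ring R] (a : R) (m : ℕ) :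
    reflect m ((X - C a) ^ m) = (1 - C a * X) ^ m := by
  simpa [reflect_sub, reflect_C] using reflect_pow (natDegree_X_sub_C_le a) m

variable {R : Type*} [CommRing R]

theorem eq_C_mul_reflect_of_X_sub_one_pow_mul {q : R[X]} {m k : ℕ} {ε : R} (hq : q.natDegree ≤ k)
    (hsym : (X - C 1) ^ m * q = C ε * reflect (m + k) ((X - C 1) ^ m * q)) :
    q = C ((-1) ^ m * ε) * reflect k q := by
  have hdeg : ((X - C (1 : R)) ^ m).natDegree ≤ m := by
    simpa using natDegree_pow_le_of_le m (natDegree_X_sub_C_le (1 : R))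
  have hsign : (1 - C 1 * X : R[X]) ^ m = C ((-1) ^ m) * (X - C 1) ^ m := by
    rw [C_pow, ← mul_pow]
    simp
  refine ((monic_X_sub_C (1 : R)).pow m).isRegular.left ?_
  calc (X - C 1) ^ m * q
      = C ε * reflect (m + k) ((X - C 1) ^ m * q) := hsym
    _ = C ε * (C ((-1) ^ m) * (X - C 1) ^ m * reflect k q) := by
      rw [reflect_mul _ _ hdeg hq, reflect_X_sub_C_pow, hsign]
    _ = (X - C 1) ^ m * (C ((-1) ^ m * ε) * reflect k q) := by
      rw [C_mul]
      ring

theorem exists_ne_zero_eq_neg_one_pow_rootMultiplicity_mul {p : R[X]} {n : ℕ} {ε : R}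
    (hp : p ≠ 0) (hdeg : p.natDegree ≤ n) (hsym : p = C ε * reflect n p) :
    ∃ c : R, c ≠ 0 ∧ c = (-1) ^ p.rootMultiplicity 1 * ε * c := by
  obtain ⟨q, hpq, hdvd⟩ := exists_eq_pow_rootMultiplicity_mul_and_not_dvd p hp 1
  generalize p.rootMultiplicity 1 = m at hpq ⊢
  subst hpq
  have : Nontrivial R := nontrivial_iff.mp ⟨_, _, hp⟩
  rw [((monic_X_sub_C (1 : R)).pow m).natDegree_mul' (right_ne_zero_of_mul hp),
    (monic_X_sub_C (1 : R)).natDegree_pow, natDegree_X_sub_C, mul_one] at hdeg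
  obtain ⟨k, rfl⟩ := Nat.exists_eq_add_of_le (le_of_add_le_left hdeg)
  have hq : q.natDegree ≤ k := Nat.le_of_add_le_add_left hdeg
  refine ⟨q.eval 1, mt dvd_iff_isRoot.mpr hdvd, ?_⟩
  calc q.eval 1 = (C ((-1) ^ m * ε) * reflect k q).eval 1 :=
        congrArg (eval 1) (eq_C_mul_reflect_of_X_sub_one_pow_mul hq hsym)
    _ = (-1) ^ m * ε * q.eval 1 := by rw [eval_C_mul, eval_one_reflect hq]

theorem stmt9_general (h2 : IsLeftRegular (2 : R)) {n : ℕ} {p : R[X]} (hp : p ≠ 0)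
    (hdeg : p.natDegree ≤ n) {ε : R} (hsym : ∀ j ≤ n, p.coeff j = ε * p.coeff (n - j)) :
    (ε = 1 → Even (p.rootMultiplicity 1)) ∧ (ε = -1 → Odd (p.rootMultiplicity 1)) := by
  obtain ⟨c, hc, hsign⟩ := exists_ne_zero_eq_neg_one_pow_rootMultiplicity_mul hp hdeg
    (eq_C_mul_reflect_of_coeff_eq hdeg hsym)
  have hneg : c ≠ -c := fun h => hc (h2.mul_left_eq_zero_iff.mp (by linear_combination h))
  constructor
  · rintro rfl
    by_contra hodd
    rw [Nat.not_even_iff_odd] at hodd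
    exact hneg (by simpa [hodd.neg_one_pow] using hsign)
  · rintro rfl
    by_contra heven
    rw [Nat.not_odd_iff_even] at heven
    exact hneg (by simpa [heven.neg_one_pow] using hsign)

end

/-- For a monic real polynomial `p` of degree `n ≥ 1` with `p_j = ε p_{n-j}`
(`ε = ±1`), the multiplicity of `1` as a root of `p` is even if `ε = 1` and odd
if `ε = -1`. -/
theorem stmt9 (n : ℕ) (hn : 1 ≤ n) (p : Polynomial ℝ) (hmonic : p.Monic)
    (hdeg : p.natDegree = n) (ε : ℝ) (hε : ε = 1 ∨ ε = -1)
    (hsym : ∀ j ≤ n, p.coeff j = ε * p.coeff (n - j)) :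
    (ε = 1 → Even (p.rootMultiplicity 1)) ∧
    (ε = -1 → Odd (p.rootMultiplicity 1)) :=
  stmt9_general (IsRegular.of_ne_zero two_ne_zero).left hmonic.ne_zero hdeg.le hsym
end

section
/- Let m ≥ 0 be an integer, a₀ ≥ 2 and a₁,…,a_m ≥ 1 integers, and let f = x₀^{a₀} + Σ_{j=1}^m x_{j−1}·x_j^{a_j} ∈ ℂ[x₀,…,x_m] be the chain type singularity polynomial. Then: (i) the only point x ∈ ℂ^{m+1} at which all partial derivatives ∂f/∂x₀, …, ∂f/∂x_m vanish is x = 0; (ii) defining r_{−1} := 1, r_k := a₀·a₁·⋯·a_k, μ_{−1} := 1, μ_k := r_k − μ_{k−1} for 0 ≤ k ≤ m, and rational weights w_k := μ_{k−1}/r_k, one has w₀ = 1/a₀, w_{k−1} + a_k·w_k = 1 for 1 ≤ k ≤ m (so every monomial of f has weighted degree 1 with respect to the weights w₀,…,w_m), and ∏_{k=0}^m (1/w_k − 1) = μ_m. -/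
open MvPolynomial

/-- `r_k = a₀ a₁ ⋯ a_k` for `k ≥ 0`. -/
def rr (a : ℕ → ℕ) (k : ℕ) : ℕ := ∏ i ∈ Finset.range (k + 1), a i

/-- `μ_k = r_k - μ_{k-1}` with `μ_{-1} = 1` (so `μ_0 = a₀ - 1`). -/
def mu (a : ℕ → ℕ) : ℕ → ℤ
  | 0 => (a 0 : ℤ) - 1
  | k + 1 => (rr a (k + 1) : ℤ) - mu a k

/-- The weights `w_k = μ_{k-1} / r_k` (so `w_0 = 1/a₀`). -/
def ww (a : ℕ → ℕ) : ℕ → ℚ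
  | 0 => 1 / (a 0 : ℚ)
  | k + 1 => (mu a k : ℚ) / (rr a (k + 1) : ℚ)

/-!
Write `M₀ = x₀ ^ a₀` and `Mⱼ = xⱼ₋₁ xⱼ ^ aⱼ` for the monomials of `f`. Only `Mᵢ` and `Mᵢ₊₁` involve
`xᵢ`, and `xᵢ ∂ᵢf = aᵢ Mᵢ + Mᵢ₊₁`, with no second term for `i = m`. At a critical point, descending
from `i = m` gives `Mᵢ = 0` for all `i`, so `x₀ = 0`. On the other hand `∂ᵢf = ∂ᵢMᵢ + xᵢ₊₁ ^ aᵢ₊₁`,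
and `∂ᵢMᵢ` is a multiple of `xᵢ₋₁` (of `x₀` if `i = 0`, because `a₀ ≥ 2`), so the vanishing of `x₀`
propagates upwards along the chain.

For the weights, `wₖ = 1 - μₖ / rₖ` while `aₖ₊₁ wₖ₊₁ = μₖ / rₖ`; moreover `1 / wₖ - 1 = μₖ / μₖ₋₁`,
so that the product telescopes.
-/

theorem mul_natCast_mul_pow_sub_one {R : Type*} [CommSemiring R] (x : R) (n : ℕ) :
    x * (n * x ^ (n - 1)) = n * x ^ n := by
  cases n with
  | zero => simp
  | succ n => rw [Nat.add_sub_cancel, pow_succ', mul_left_comm]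

section Polynomial

variable (R : Type*) [CommSemiring R] {m : ℕ} (a : ℕ → ℕ)

/-- The monomials `x₀ ^ a₀` and `xⱼ₋₁ xⱼ ^ aⱼ` (`1 ≤ j ≤ m`) of the chain type polynomial, indexed
by the variable that carries the exponent. -/
noncomputable def chainMonomial : Fin (m + 1) → MvPolynomial (Fin (m + 1)) R :=
  Fin.cons (X 0 ^ a 0) fun j : Fin m => X j.castSucc * X j.succ ^ a ((j : ℕ) + 1)

variable (m) in
/-- The chain type polynomial `x₀ ^ a₀ + ∑ⱼ xⱼ₋₁ xⱼ ^ aⱼ` in `m + 1` variables; only the exponents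
`a 0, …, a m` enter. -/
noncomputable def chainPolynomial : MvPolynomial (Fin (m + 1)) R :=
  X 0 ^ a 0 + ∑ j : Fin m, X j.castSucc * X j.succ ^ a ((j : ℕ) + 1)

theorem chainMonomial_zero : chainMonomial R a (0 : Fin (m + 1)) = X 0 ^ a 0 :=
  rfl

theorem chainMonomial_succ (j : Fin m) :
    chainMonomial R a j.succ = X j.castSucc * X j.succ ^ a ((j : ℕ) + 1) :=
  rfl

theorem chainPolynomial_eq_sum : chainPolynomial R m a = ∑ i, chainMonomial R a i := by
  rw [Fin.sum_univ_succ]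
  rfl

theorem pderiv_chainMonomial_zero :
    pderiv 0 (chainMonomial R a (0 : Fin (m + 1))) =
      (a 0 : MvPolynomial _ R) * X 0 ^ (a 0 - 1) := by
  simp [chainMonomial_zero]

theorem pderiv_chainMonomial_succ (j : Fin m) :
    pderiv j.succ (chainMonomial R a j.succ) =
      X j.castSucc * ((a ((j : ℕ) + 1) : MvPolynomial _ R) * X j.succ ^ (a ((j : ℕ) + 1) - 1)) := by
  simp [chainMonomial_succ, pderiv_X_of_ne j.castSucc_lt_succ.ne]

theorem pderiv_castSucc_chainMonomial_succ (j : Fin m) :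
    pderiv j.castSucc (chainMonomial R a j.succ) = X j.succ ^ a ((j : ℕ) + 1) := by
  simp [chainMonomial_succ, pderiv_X_of_ne j.castSucc_lt_succ.ne']

theorem pderiv_chainMonomial_of_ne {i k : Fin (m + 1)} (hki : k ≠ i) (hki' : (k : ℕ) ≠ i + 1) :
    pderiv i (chainMonomial R a k) = 0 := by
  cases k using Fin.cases with
  | zero => simp [chainMonomial_zero, pderiv_X_of_ne hki]
  | succ j =>
    have hji : j.castSucc ≠ i := by
      rintro rfl
      exact hki' rfl
    simp [chainMonomial_succ, pderiv_X_of_ne hki, pderiv_X_of_ne hji]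

theorem pderiv_castSucc_chainPolynomial (j : Fin m) :
    pderiv j.castSucc (chainPolynomial R m a) =
      pderiv j.castSucc (chainMonomial R a j.castSucc) + X j.succ ^ a ((j : ℕ) + 1) := by
  rw [chainPolynomial_eq_sum, map_sum, ← pderiv_castSucc_chainMonomial_succ]
  refine Fintype.sum_eq_add _ _ j.castSucc_lt_succ.ne fun k hk => ?_
  exact pderiv_chainMonomial_of_ne R a hk.1 fun h => hk.2 (Fin.ext h)

theorem pderiv_last_chainPolynomial :
    pderiv (Fin.last m) (chainPolynomial R m a) =
      pderiv (Fin.last m) (chainMonomial R a (Fin.last m)) := by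
  rw [chainPolynomial_eq_sum, map_sum]
  exact Fintype.sum_eq_single _ fun k hk => pderiv_chainMonomial_of_ne R a hk k.isLt.ne

theorem X_mul_pderiv_chainMonomial (i : Fin (m + 1)) :
    X i * pderiv i (chainMonomial R a i) = (a i : MvPolynomial _ R) * chainMonomial R a i := by
  cases i using Fin.cases with
  | zero =>
    rw [pderiv_chainMonomial_zero, mul_natCast_mul_pow_sub_one, chainMonomial_zero, Fin.val_zero]
  | succ j =>
    rw [pderiv_chainMonomial_succ, mul_left_comm, mul_natCast_mul_pow_sub_one, chainMonomial_succ,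
      Fin.val_succ, mul_left_comm]

theorem X_mul_pderiv_castSucc_chainPolynomial (j : Fin m) :
    X j.castSucc * pderiv j.castSucc (chainPolynomial R m a) =
      (a j : MvPolynomial _ R) * chainMonomial R a j.castSucc + chainMonomial R a j.succ := by
  rw [pderiv_castSucc_chainPolynomial, mul_add, X_mul_pderiv_chainMonomial, Fin.val_castSucc,
    chainMonomial_succ]

theorem X_mul_pderiv_last_chainPolynomial :
    X (Fin.last m) * pderiv (Fin.last m) (chainPolynomial R m a) =
      (a m : MvPolynomial _ R) * chainMonomial R a (Fin.last m) := by
  rw [pderiv_last_chainPolynomial, X_mul_pderiv_chainMonomial, Fin.val_last]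

end Polynomial

section CriticalPoints

variable {R : Type*} [CommSemiring R] {m : ℕ} {a : ℕ → ℕ} {x : Fin (m + 1) → R}

theorem eval_pderiv_chainMonomial_zero (ha0 : 2 ≤ a 0) (hx : x 0 = 0) :
    eval x (pderiv 0 (chainMonomial R a 0)) = 0 := by
  simp [pderiv_chainMonomial_zero, hx, zero_pow (Nat.sub_ne_zero_of_lt ha0)]

theorem eval_pderiv_chainMonomial_succ {j : Fin m} (hx : x j.castSucc = 0) :
    eval x (pderiv j.succ (chainMonomial R a j.succ)) = 0 := by
  simp [pderiv_chainMonomial_succ, hx]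

theorem eval_zero_pderiv_chainPolynomial (ha0 : 2 ≤ a 0) (ha : ∀ j ≤ m, a j ≠ 0)
    (i : Fin (m + 1)) : eval (0 : Fin (m + 1) → R) (pderiv i (chainPolynomial R m a)) = 0 := by
  have diag : eval (0 : Fin (m + 1) → R) (pderiv i (chainMonomial R a i)) = 0 := by
    cases i using Fin.cases with
    | zero => exact eval_pderiv_chainMonomial_zero ha0 rfl
    | succ j => exact eval_pderiv_chainMonomial_succ rfl
  cases i using Fin.lastCases with
  | last => rw [pderiv_last_chainPolynomial, diag]
  | cast j =>
    rw [pderiv_castSucc_chainPolynomial, map_add, diag, zero_add, map_pow, eval_X, Pi.zero_apply,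
      zero_pow (ha _ j.isLt)]

theorem eq_zero_of_eval_pderiv_chainPolynomial [IsReduced R] (ha0 : 2 ≤ a 0)
    (hx : ∀ i, eval x (pderiv i (chainPolynomial R m a)) = 0) (hx0 : x 0 = 0) : x = 0 := by
  suffices h : ∀ i, x i = 0 ∧ eval x (pderiv i (chainMonomial R a i)) = 0 from
    funext fun i => (h i).1
  intro i
  induction i using Fin.induction with
  | zero => exact ⟨hx0, eval_pderiv_chainMonomial_zero ha0 hx0⟩
  | succ j ih =>
    obtain ⟨hxj, hdiag⟩ := ih
    have hpow := hx j.castSucc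
    rw [pderiv_castSucc_chainPolynomial, map_add, hdiag, zero_add, map_pow, eval_X] at hpow
    exact ⟨eq_zero_of_pow_eq_zero hpow, eval_pderiv_chainMonomial_succ hxj⟩

variable [NoZeroDivisors R]

theorem eval_chainMonomial_eq_zero (ha : ∀ j ≤ m, (a j : R) ≠ 0)
    (hx : ∀ i, eval x (pderiv i (chainPolynomial R m a)) = 0) (i : Fin (m + 1)) :
    eval x (chainMonomial R a i) = 0 := by
  induction i using Fin.reverseInduction with
  | last =>
    have euler := congrArg (eval x) (X_mul_pderiv_last_chainPolynomial R (m := m) a)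
    rw [map_mul, hx, mul_zero, map_mul, map_natCast] at euler
    exact (mul_eq_zero.mp euler.symm).resolve_left (ha m le_rfl)
  | cast j ih =>
    have euler := congrArg (eval x) (X_mul_pderiv_castSucc_chainPolynomial R a j)
    rw [map_mul, hx, mul_zero, map_add, ih, add_zero, map_mul, map_natCast] at euler
    exact (mul_eq_zero.mp euler.symm).resolve_left (ha j j.isLt.le)

theorem eval_pderiv_chainPolynomial_eq_zero_iff (ha0 : 2 ≤ a 0) (ha : ∀ j ≤ m, (a j : R) ≠ 0) :
    (∀ i, eval x (pderiv i (chainPolynomial R m a)) = 0) ↔ x = 0 := by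
  constructor
  · intro hx
    have hpow := eval_chainMonomial_eq_zero ha hx 0
    rw [chainMonomial_zero, map_pow, eval_X] at hpow
    exact eq_zero_of_eval_pderiv_chainPolynomial ha0 hx (eq_zero_of_pow_eq_zero hpow)
  · rintro rfl
    exact eval_zero_pderiv_chainPolynomial ha0 fun j hj h => ha j hj (by rw [h, Nat.cast_zero])

end CriticalPoints

section Weights

variable {a : ℕ → ℕ} {k : ℕ}

theorem rr_succ (a : ℕ → ℕ) (k : ℕ) : rr a (k + 1) = rr a k * a (k + 1) :=
  Finset.prod_range_succ _ _

theorem rr_ne_zero (ha : ∀ j ≤ k, a j ≠ 0) : rr a k ≠ 0 :=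
  Finset.prod_ne_zero_iff.mpr fun j hj => ha j (Finset.mem_range_succ_iff.mp hj)

theorem mu_mem_Ioo (ha0 : 2 ≤ a 0) (ha : ∀ j ≤ k, a j ≠ 0) :
    mu a k ∈ Set.Ioo 0 (rr a k : ℤ) := by
  induction k with
  | zero =>
    simp only [mu, rr, zero_add, Finset.prod_range_one, Set.mem_Ioo]
    lia
  | succ k ih =>
    obtain ⟨hpos, hlt⟩ := ih fun j hj => ha j (hj.trans k.le_succ)
    have hle : rr a k ≤ rr a (k + 1) := by
      rw [rr_succ]
      exact Nat.le_mul_of_pos_right _ (Nat.pos_of_ne_zero (ha _ le_rfl))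
    simp only [mu, Set.mem_Ioo]
    lia

theorem ww_eq_one_sub (hr : rr a k ≠ 0) : ww a k = 1 - (mu a k : ℚ) / rr a k := by
  have hr' : (rr a k : ℚ) ≠ 0 := Nat.cast_ne_zero.mpr hr
  rw [eq_sub_iff_add_eq]
  cases k with
  | zero =>
    simp only [rr, zero_add, Finset.prod_range_one] at hr' ⊢
    rw [ww, mu, Int.cast_sub, Int.cast_natCast, Int.cast_one, ← add_div, add_sub_cancel,
      div_self hr']
  | succ k => simp [ww, mu, ← add_div, div_self hr']

theorem mul_ww_succ (hak : a (k + 1) ≠ 0) :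
    (a (k + 1) : ℚ) * ww a (k + 1) = (mu a k : ℚ) / rr a k := by
  rw [ww, rr_succ, Nat.cast_mul, mul_comm (rr a k : ℚ), mul_div_assoc',
    mul_div_mul_left _ _ (Nat.cast_ne_zero.mpr hak)]

theorem ww_add_mul_ww_succ (ha : ∀ j ≤ k + 1, a j ≠ 0) :
    ww a k + (a (k + 1) : ℚ) * ww a (k + 1) = 1 := by
  rw [ww_eq_one_sub (rr_ne_zero fun j hj => ha j (hj.trans k.le_succ)), mul_ww_succ (ha _ le_rfl),
    sub_add_cancel]

theorem one_div_ww_succ_sub_one (hmu : mu a k ≠ 0) :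
    1 / ww a (k + 1) - 1 = (mu a (k + 1) : ℚ) / mu a k := by
  have hmu' : (mu a k : ℚ) ≠ 0 := Int.cast_ne_zero.mpr hmu
  rw [ww, one_div_div, div_sub_one hmu', mu, Int.cast_sub, Int.cast_natCast]

theorem prod_one_div_ww_sub_one {n : ℕ} (hmu : ∀ k < n, mu a k ≠ 0) :
    ∏ k ∈ Finset.range (n + 1), (1 / ww a k - 1) = (mu a n : ℚ) := by
  induction n with
  | zero => simp [ww, mu]
  | succ n ih =>
    have hn : mu a n ≠ 0 := hmu n n.lt_succ_self
    rw [Finset.prod_range_succ, ih fun k hk => hmu k (hk.trans n.lt_succ_self),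
      one_div_ww_succ_sub_one hn, mul_div_cancel₀ _ (Int.cast_ne_zero.mpr hn)]

end Weights

theorem stmt17_general {R : Type*} [CommSemiring R] [NoZeroDivisors R] (m : ℕ) (a : ℕ → ℕ)
    (ha0 : 2 ≤ a 0) (ha : ∀ j ≤ m, (a j : R) ≠ 0) :
    (∀ x : Fin (m + 1) → R,
      (∀ i : Fin (m + 1), eval x (pderiv i (chainPolynomial R m a)) = 0) ↔ x = 0) ∧
    ww a 0 = 1 / (a 0 : ℚ) ∧
    (∀ k, 1 ≤ k → k ≤ m → ww a (k - 1) + (a k : ℚ) * ww a k = 1) ∧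
    (∏ k ∈ Finset.range (m + 1), (1 / ww a k - 1)) = (mu a m : ℚ) := by
  have ha' : ∀ j ≤ m, a j ≠ 0 := fun j hj h => ha j hj (by rw [h, Nat.cast_zero])
  refine ⟨fun x => eval_pderiv_chainPolynomial_eq_zero_iff ha0 ha, rfl, fun k hk hkm => ?_, ?_⟩
  · obtain ⟨k, rfl⟩ := Nat.exists_eq_add_of_le' hk
    exact ww_add_mul_ww_succ fun j hj => ha' j (hj.trans hkm)
  · exact prod_one_div_ww_sub_one fun k hk =>
      (mu_mem_Ioo ha0 fun j hj => ha' j (hj.trans hk.le)).1.ne'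

/-- For the chain type singularity `f = x₀^{a₀} + Σ_{j=1}^m x_{j-1} x_j^{a_j}`:
(i) the only common zero of all partial derivatives is `0`;
(ii) the weights satisfy `w₀ = 1/a₀`, `w_{k-1} + a_k w_k = 1`, and
`∏_{k=0}^m (1/w_k - 1) = μ_m` (the Milnor number). -/
theorem stmt17 (m : ℕ) (a : ℕ → ℕ) (ha0 : 2 ≤ a 0)
    (ha : ∀ j, 1 ≤ j → j ≤ m → 1 ≤ a j)
    (f : MvPolynomial (Fin (m + 1)) ℂ)
    (hf : f = X 0 ^ a 0 + ∑ j : Fin m, X j.castSucc * X j.succ ^ a ((j : ℕ) + 1)) :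
    (∀ x : Fin (m + 1) → ℂ,
      (∀ i : Fin (m + 1), eval x (pderiv i f) = 0) → x = 0) ∧
    ww a 0 = 1 / (a 0 : ℚ) ∧
    (∀ k, 1 ≤ k → k ≤ m → ww a (k - 1) + (a k : ℚ) * ww a k = 1) ∧
    (∏ k ∈ Finset.range (m + 1), (1 / ww a k - 1)) = (mu a m : ℚ) := by
  obtain ⟨crit, weights⟩ := stmt17_general (R := ℂ) m a ha0 fun j hj => Nat.cast_ne_zero.mpr <| by
    rcases j.eq_zero_or_pos with rfl | hj0 <;> grind
  exact ⟨fun x hx => (crit x).mp (by rwa [hf] at hx), weights⟩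
end

section
/- Let m ≥ 0 be an integer and a₀ ≥ 2, a₁,…,a_m ≥ 1 integers; set r_{−1} := 1, r_k := a₀⋯a_k, μ_{−1} := 1, μ_k := r_k − μ_{k−1}, μ := μ_m, and rational weights w_k := μ_{k−1}/r_k for 0 ≤ k ≤ m. Let k₀ ∈ {1,2} with k₀ ≡ m+1 (mod 2) (i.e. k₀ = 1 if m is even, k₀ = 2 if m is odd). Let p ∈ ℤ[x] be the quotient of ∏_{k ∈ {−1,…,m}, m−k even} (x^{r_k} − 1) by ∏_{k ∈ {−1,…,m}, m−k odd} (x^{r_k} − 1); p is monic of degree μ with only simple roots, all on the unit circle. Let 0 ≤ β₁ < β₂ < ⋯ < β_μ < 1 be the increasing enumeration of all β ∈ [0,1) with p(e^{−2πiβ}) = 0, and set α_j := μ·β_j − j + k₀/2 for 1 ≤ j ≤ μ. Then the following identity holds in the group algebra over ℤ of the additive group ℚ (writing t^q for the basis element corresponding to q ∈ ℚ): (Σ_{j=1}^μ t^{α_j + (m−1)/2 + 1}) · ∏_{k=0}^m (t^{w_k} − 1) = ∏_{k=0}^m (t^1 − t^{w_k}). -/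
open Polynomial

/-- Shifted version: `rr' a k = r_{k-1}`, with `r_{-1} = 1`. -/
def rr' (a : ℕ → ℕ) : ℕ → ℕ
  | 0 => 1
  | k + 1 => rr a k

/-!
Let `B n` be the set of arguments of the roots of the polynomial of a chain of length `n`, and
let `D n x = #(B n) x - #{b ∈ B n | b ≤ x} + 1 / 2`. Up to an explicit shift the spectral numbers
are the values of `D n` on `B n`. The set `B (n + 1)` is the complement of `B n` in the grid of
arguments of the `r_n`-th roots of unity, hence `D (n + 1) = -D n` on that grid. Since `D n` is
affine of slope `#(B n)` between two neighbours of the coarser grid, summing `t ^ D (n + 1)` over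
the finer grid multiplies the sum of `t ^ (-D n)` over the coarser one by a geometric sum of
ratio `t ^ (-w_n)`. The relation `a_{n + 1} w_{n + 1} = 1 - w_n` makes the product of these
geometric sums telescope, and splitting the sum over the finer grid into the sums over
`B (n + 1)` and `B n` gives the formula by induction. Each step replaces `t` by `t⁻¹`; writing all
terms through `t ^ (w / 2) - t ^ (-w / 2)`, which only changes sign, makes both inductions work for
an arbitrary character `T` of `ℝ`.
-/

section AlternatingDiff

open Finset

variable {α M : Type*} [DecidableEq α] [CommMonoid M]

/-- The alternating difference `G n \ (G (n - 1) \ (⋯ \ G 0))` of a sequence of finite sets. For an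
increasing sequence its indicator function is the alternating sum of those of `G n, …, G 0`, so that
it stands for the quotient of products which defines the Orlik–Randell polynomial. -/
def alternatingDiff (G : ℕ → Finset α) : ℕ → Finset α
  | 0 => G 0
  | n + 1 => G (n + 1) \ alternatingDiff G n

lemma alternatingDiff_subset (G : ℕ → Finset α) : ∀ n, alternatingDiff G n ⊆ G n
  | 0 => Subset.rfl
  | _ + 1 => sdiff_subset

lemma prod_even_sub_succ (f : ℕ → M) (n : ℕ) :
    ∏ i ∈ range (n + 2) with Even (n + 1 - i), f i =
      f (n + 1) * ∏ i ∈ range (n + 1) with Odd (n - i), f i := by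
  have hfilter : {i ∈ range (n + 2) | Even (n + 1 - i)} =
      insert (n + 1) {i ∈ range (n + 1) | Odd (n - i)} := by
    ext i
    simp only [mem_filter, mem_range, mem_insert, Nat.even_iff, Nat.odd_iff]
    omega
  rw [hfilter, prod_insert (by simp)]

lemma prod_odd_sub_succ (f : ℕ → M) (n : ℕ) :
    ∏ i ∈ range (n + 2) with Odd (n + 1 - i), f i =
      ∏ i ∈ range (n + 1) with Even (n - i), f i := by
  congr 1
  ext i
  simp only [mem_filter, mem_range, Nat.even_iff, Nat.odd_iff]
  omega

lemma prod_even_eq_prod_odd_mul_prod_alternatingDiff {G : ℕ → Finset α} {n : ℕ}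
    (hG : ∀ i < n, G i ⊆ G (i + 1)) (f : α → M) :
    ∏ i ∈ range (n + 1) with Even (n - i), ∏ x ∈ G i, f x =
      (∏ i ∈ range (n + 1) with Odd (n - i), ∏ x ∈ G i, f x) *
        ∏ x ∈ alternatingDiff G n, f x := by
  induction n with
  | zero => simp [alternatingDiff]
  | succ n ih =>
    have hsub := (alternatingDiff_subset G n).trans (hG n n.lt_succ_self)
    rw [prod_even_sub_succ, prod_odd_sub_succ, ih fun i hi => hG i (hi.trans n.lt_succ_self),
      ← prod_sdiff hsub, alternatingDiff]
    ac_rfl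

end AlternatingDiff

section Grid

open Finset

/-- The grid `{0, 1/r, …, (r - 1)/r}` of the arguments, in full turns, of the `r`-th roots of
unity. -/
noncomputable def grid (r : ℕ) : Finset ℝ := (range r).image fun s : ℕ => (s : ℝ) / r

lemma injOn_div_range (r : ℕ) : Set.InjOn (fun s : ℕ => (s : ℝ) / r) (range r) := by
  intro s hs t _ hst
  have hr : (r : ℝ) ≠ 0 := by
    have := mem_range.1 hs
    exact_mod_cast (by omega : r ≠ 0)
  exact_mod_cast (div_left_inj' hr).1 hst

lemma mem_grid {r : ℕ} {x : ℝ} : x ∈ grid r ↔ ∃ s < r, (s : ℝ) / r = x := by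
  simp [grid]

lemma card_grid (r : ℕ) : #(grid r) = r := by
  rw [grid, card_image_of_injOn (injOn_div_range r), card_range]

@[to_additive]
lemma prod_grid {M : Type*} [CommMonoid M] (r : ℕ) (f : ℝ → M) :
    ∏ g ∈ grid r, f g = ∏ s ∈ range r, f (s / r) :=
  prod_image (injOn_div_range r)

lemma grid_subset_Ico (r : ℕ) : ↑(grid r) ⊆ Set.Ico (0 : ℝ) 1 := by
  intro x hx
  obtain ⟨s, hs, rfl⟩ := mem_grid.1 hx
  have hsr : (s : ℝ) < r := by exact_mod_cast hs
  exact ⟨by positivity, (div_lt_one (s.cast_nonneg.trans_lt hsr)).2 hsr⟩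

lemma grid_subset_grid_mul (r : ℕ) {c : ℕ} (hc : c ≠ 0) : grid r ⊆ grid (r * c) := by
  intro x hx
  obtain ⟨s, hs, rfl⟩ := mem_grid.1 hx
  refine mem_grid.2 ⟨s * c, Nat.mul_lt_mul_of_pos_right hs hc.bot_lt, ?_⟩
  push_cast
  exact mul_div_mul_right _ _ (by exact_mod_cast hc)

lemma sum_range_mul {M : Type*} [AddCommMonoid M] (r c : ℕ) (f : ℕ → M) :
    ∑ s ∈ range (r * c), f s = ∑ s ∈ range r, ∑ q ∈ range c, f (s * c + q) := by
  induction r with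
  | zero => simp
  | succ r ih => rw [Nat.succ_mul, sum_range_add, ih, sum_range_succ]

lemma sum_grid_mul {M : Type*} [AddCommMonoid M] (r c : ℕ) (f : ℝ → M) :
    ∑ g ∈ grid (r * c), f g = ∑ g ∈ grid r, ∑ q ∈ range c, f (g + q / (r * c)) := by
  rw [sum_grid, sum_grid, sum_range_mul]
  refine sum_congr rfl fun s _ => sum_congr rfl fun q hq => congrArg f ?_
  have hc : (c : ℝ) ≠ 0 := by
    have := mem_range.1 hq
    exact_mod_cast (by omega : c ≠ 0)
  push_cast
  rw [add_div, mul_div_mul_right _ _ hc]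

end Grid

section Discrepancy

open Finset

/-- The discrepancy `#S · x - #{b ∈ S | b ≤ x}` of a finite set `S` of reals. The summand `1 / 2`
centres it, so that passing to the complement in a grid only changes its sign. -/
noncomputable def discrepancy (S : Finset ℝ) (x : ℝ) : ℝ := #S * x - #{b ∈ S | b ≤ x} + 1 / 2

lemma discrepancy_sdiff {S G : Finset ℝ} (hS : S ⊆ G) (x : ℝ) :
    discrepancy (G \ S) x = discrepancy G x - discrepancy S x + 1 / 2 := by
  have hcard : (#(G \ S) : ℝ) + #S = #G := by
    exact_mod_cast card_sdiff_add_card_eq_card hS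
  have hfilter : {b ∈ G \ S | b ≤ x} = {b ∈ G | b ≤ x} \ {b ∈ S | b ≤ x} := by grind
  have hcount : (#{b ∈ G \ S | b ≤ x} : ℝ) + #{b ∈ S | b ≤ x} = #{b ∈ G | b ≤ x} := by
    rw [hfilter]
    exact_mod_cast card_sdiff_add_card_eq_card (filter_subset_filter _ hS)
  simp only [discrepancy]
  linear_combination x * hcard - hcount

lemma discrepancy_grid {r : ℕ} {x : ℝ} (hx : x ∈ grid r) : discrepancy (grid r) x = -1 / 2 := by
  obtain ⟨s, hs, rfl⟩ := mem_grid.1 hx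
  have hr : (0 : ℝ) < r := by exact_mod_cast s.zero_le.trans_lt hs
  have hcount : #{b ∈ grid r | b ≤ (s : ℝ) / r} = s + 1 := by
    have hfilter : {u ∈ range r | ((u : ℕ) : ℝ) / r ≤ s / r} = range (s + 1) := by
      ext u
      simp only [mem_filter, mem_range, div_le_div_iff_of_pos_right hr, Nat.cast_le]
      omega
    rw [grid, filter_image, card_image_of_injOn ((injOn_div_range r).mono (filter_subset _ _)),
      hfilter, card_range]
  rw [discrepancy, hcount, card_grid, mul_div_cancel₀ _ hr.ne']
  push_cast
  ring

lemma discrepancy_grid_sdiff {r : ℕ} {S : Finset ℝ} (hS : S ⊆ grid r) {x : ℝ} (hx : x ∈ grid r) :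
    discrepancy (grid r \ S) x = -discrepancy S x := by
  rw [discrepancy_sdiff hS, discrepancy_grid hx]
  ring

lemma discrepancy_add_of_lt_inv {r : ℕ} {S : Finset ℝ} (hS : S ⊆ grid r) {x δ : ℝ}
    (hx : x ∈ grid r) (hδ₀ : 0 ≤ δ) (hδ : δ < 1 / r) :
    discrepancy S (x + δ) = discrepancy S x + δ * #S := by
  obtain ⟨s, hs, rfl⟩ := mem_grid.1 hx
  have hr : (0 : ℝ) < r := by exact_mod_cast s.zero_le.trans_lt hs
  have hcount : {b ∈ S | b ≤ (s : ℝ) / r + δ} = {b ∈ S | b ≤ (s : ℝ) / r} := by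
    refine filter_congr fun b hb => ⟨fun hle => ?_, fun hle => hle.trans (by linarith)⟩
    obtain ⟨u, -, rfl⟩ := mem_grid.1 (hS hb)
    have hlt : (u : ℝ) / r < ((s + 1 : ℕ) : ℝ) / r := by
      push_cast
      rw [add_div]
      linarith
    have hus : u < s + 1 := by exact_mod_cast (div_lt_div_iff_of_pos_right hr).1 hlt
    gcongr
    omega
  rw [discrepancy, discrepancy, hcount]
  ring

lemma discrepancy_image_univ {n : ℕ} {β : Fin n → ℝ} (hβ : StrictMono β) (j : Fin n) :
    discrepancy (univ.image β) (β j) = n * β j - (j + 1) + 1 / 2 := by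
  have hfilter : ({i | β i ≤ β j} : Finset (Fin n)) = Iic j := by
    ext i
    simp [hβ.le_iff_le]
  rw [discrepancy, filter_image, card_image_of_injective _ hβ.injective,
    card_image_of_injective _ hβ.injective, hfilter, Fin.card_Iic, card_fin]
  push_cast
  ring

end Discrepancy

section HalfDiff

open Finset

variable {R : Type*} [CommRing R] (T : AddChar ℝ R)

/-- The difference `T (x / 2) - T (-x / 2)` for a character `T` of `ℝ`; if `T = exp`, it is
`2 sinh (x / 2)`. -/
noncomputable def halfDiff (x : ℝ) : R := T (x / 2) - T (-(x / 2))

lemma halfDiff_inv (x : ℝ) : halfDiff T⁻¹ x = -halfDiff T x := by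
  simp [halfDiff]

lemma mul_halfDiff (x y : ℝ) : T x * halfDiff T y = T (x + y / 2) - T (x - y / 2) := by
  rw [halfDiff, mul_sub, ← AddChar.map_add_eq_mul, ← AddChar.map_add_eq_mul, sub_eq_add_neg x]

lemma mul_halfDiff_one_sub_mul_halfDiff (w : ℝ) :
    T (w / 2) * halfDiff T 1 - T (1 / 2) * halfDiff T w = halfDiff T (1 - w) := by
  rw [mul_halfDiff, mul_halfDiff, halfDiff]
  ring_nf

lemma sum_range_inv_mul_halfDiff (w : ℝ) (n : ℕ) :
    (∑ q ∈ range n, T⁻¹ (q * w)) * halfDiff T w = T ((1 - n) * w / 2) * halfDiff T (n * w) := by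
  have hterm (q : ℕ) : T⁻¹ (q * w) * halfDiff T w =
      T (w / 2 - q * w) - T (w / 2 - (q + 1 : ℕ) * w) := by
    rw [AddChar.inv_apply, mul_halfDiff]
    push_cast
    ring_nf
  rw [sum_mul, sum_congr rfl fun q _ => hterm q, sum_range_sub', mul_halfDiff]
  push_cast
  ring_nf

lemma prod_halfDiff_inv (n : ℕ) (f : ℕ → ℝ) :
    ∏ i ∈ range n, halfDiff T⁻¹ (f i) = (-1) ^ n * ∏ i ∈ range n, halfDiff T (f i) := by
  simp only [halfDiff_inv, prod_neg, card_range]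

lemma prod_sub_one (n : ℕ) (w : ℕ → ℝ) :
    ∏ i ∈ range n, (T (w i) - 1) =
      (∏ i ∈ range n, T (w i / 2)) * ∏ i ∈ range n, halfDiff T (w i) := by
  rw [← prod_mul_distrib]
  refine prod_congr rfl fun i _ => ?_
  rw [mul_halfDiff, add_halves, sub_self, AddChar.map_zero_eq_one]

lemma prod_one_sub (n : ℕ) (w : ℕ → ℝ) :
    ∏ i ∈ range n, (T 1 - T (w i)) =
      T (n / 2) * (∏ i ∈ range n, T (w i / 2)) * ∏ i ∈ range n, halfDiff T (1 - w i) := by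
  have hpow : T (n / 2) = ∏ _i ∈ range n, T (1 / 2) := by
    rw [prod_const, card_range, ← AddChar.map_nsmul_eq_pow, nsmul_eq_mul, mul_one_div]
  rw [hpow, ← prod_mul_distrib, ← prod_mul_distrib]
  refine prod_congr rfl fun i _ => ?_
  rw [← AddChar.map_add_eq_mul, mul_halfDiff]
  ring_nf

lemma sum_discrepancy_grid_mul_sdiff {r c : ℕ} (hc : c ≠ 0) {S : Finset ℝ} (hS : S ⊆ grid r) :
    ∑ g ∈ grid (r * c), T (discrepancy (grid (r * c) \ S) g) =
      (∑ g ∈ grid r, T⁻¹ (discrepancy S g)) * ∑ q ∈ range c, T⁻¹ (q * (#S / (r * c))) := by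
  have hSc := hS.trans (grid_subset_grid_mul r hc)
  rw [sum_congr rfl fun g hg => by rw [discrepancy_grid_sdiff hSc hg, ← AddChar.inv_apply],
    sum_grid_mul, sum_mul_sum]
  refine sum_congr rfl fun g hg => sum_congr rfl fun q hq => ?_
  obtain ⟨s, hs, -⟩ := mem_grid.1 hg
  have hr : (0 : ℝ) < r := by exact_mod_cast s.zero_le.trans_lt hs
  have hc' : (0 : ℝ) < c := by exact_mod_cast hc.bot_lt
  have hqc : (q : ℝ) < c := by exact_mod_cast mem_range.1 hq
  have hδ : (q : ℝ) / (r * c) < 1 / r := by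
    rw [div_lt_div_iff₀ (mul_pos hr hc') hr]
    nlinarith
  rw [discrepancy_add_of_lt_inv hS hg (by positivity) hδ, AddChar.map_add_eq_mul]
  ring_nf

end HalfDiff

section ChainType

open Finset

variable {a : ℕ → ℕ} {n : ℕ}

lemma rr'_eq_prod (a : ℕ → ℕ) (n : ℕ) : rr' a n = ∏ i ∈ range n, a i := by
  cases n <;> rfl

lemma rr'_succ (a : ℕ → ℕ) (n : ℕ) : rr' a (n + 1) = rr' a n * a n := by
  simp only [rr'_eq_prod, prod_range_succ]

lemma rr'_ne_zero (h : ∀ i < n, a i ≠ 0) : rr' a n ≠ 0 := by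
  rw [rr'_eq_prod]
  exact prod_ne_zero_iff.2 fun i hi => h i (mem_range.1 hi)

lemma rr'_ne_zero_of_le {i : ℕ} (h : rr' a n ≠ 0) (hi : i ≤ n) : rr' a i ≠ 0 := by
  rw [rr'_eq_prod] at h ⊢
  exact ne_zero_of_dvd_ne_zero h (prod_dvd_prod_of_subset _ _ _ (range_subset_range.2 hi))

lemma grid_rr'_subset_succ (h : rr' a (n + 1) ≠ 0) : grid (rr' a n) ⊆ grid (rr' a (n + 1)) := by
  rw [rr'_succ] at h ⊢
  exact grid_subset_grid_mul _ (right_ne_zero_of_mul h)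

/-- The arguments, in full turns, of the roots of the Orlik–Randell polynomial of the chain with
exponents `a 0, …, a (n - 1)`: the numbers `β_j` of the HOR recipe (here `n = m + 1`). -/
noncomputable def rootAngles (a : ℕ → ℕ) : ℕ → Finset ℝ :=
  alternatingDiff fun n => grid (rr' a n)

lemma rootAngles_zero (a : ℕ → ℕ) : rootAngles a 0 = {0} := by
  simp [rootAngles, alternatingDiff, grid, rr']

lemma rootAngles_succ (a : ℕ → ℕ) (n : ℕ) :
    rootAngles a (n + 1) = grid (rr' a (n + 1)) \ rootAngles a n := rfl

lemma rootAngles_subset (a : ℕ → ℕ) (n : ℕ) : rootAngles a n ⊆ grid (rr' a n) :=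
  alternatingDiff_subset _ n

lemma rootAngles_subset_succ (h : rr' a (n + 1) ≠ 0) : rootAngles a n ⊆ grid (rr' a (n + 1)) :=
  (rootAngles_subset a n).trans (grid_rr'_subset_succ h)

lemma card_rootAngles_succ (h : rr' a (n + 1) ≠ 0) :
    (#(rootAngles a (n + 1)) : ℤ) = rr' a (n + 1) - #(rootAngles a n) := by
  have hcard := card_sdiff_add_card_eq_card (rootAngles_subset_succ h)
  rw [card_grid, ← rootAngles_succ] at hcard
  omega

lemma card_rootAngles_succ_eq_mu (h : rr' a (n + 1) ≠ 0) :
    (#(rootAngles a (n + 1)) : ℤ) = mu a n := by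
  induction n with
  | zero => simp [card_rootAngles_succ h, rootAngles_zero, rr', rr, mu]
  | succ n ih =>
    rw [card_rootAngles_succ h, ih (rr'_ne_zero_of_le h (n + 1).le_succ), mu, rr']

lemma ww_eq_card_div (h : rr' a n ≠ 0) :
    (ww a n : ℝ) = #(rootAngles a n) / rr' a (n + 1) := by
  cases n with
  | zero => simp [ww, rootAngles_zero, rr', rr]
  | succ n =>
    have hmu : (#(rootAngles a (n + 1)) : ℝ) = mu a n := by
      exact_mod_cast card_rootAngles_succ_eq_mu h
    rw [hmu, ww, rr']
    push_cast
    rfl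

lemma mul_ww_zero (h : a 0 ≠ 0) : (a 0 : ℝ) * ww a 0 = 1 := by
  have h' : (a 0 : ℝ) ≠ 0 := by exact_mod_cast h
  simp [ww, h']

lemma mul_ww_succ_s19 (h : rr' a (n + 2) ≠ 0) : (a (n + 1) : ℝ) * ww a (n + 1) = 1 - ww a n := by
  have h₁ := rr'_ne_zero_of_le h (n + 1).le_succ
  have hcard : (#(rootAngles a (n + 1)) : ℝ) = rr' a (n + 1) - #(rootAngles a n) := by
    exact_mod_cast card_rootAngles_succ h₁
  have hr : (rr' a (n + 1) : ℝ) ≠ 0 := by exact_mod_cast h₁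
  have ha : (a (n + 1) : ℝ) ≠ 0 := by
    rw [rr'_succ] at h
    exact_mod_cast right_ne_zero_of_mul h
  rw [ww_eq_card_div h₁, ww_eq_card_div (rr'_ne_zero_of_le h₁ n.le_succ), rr'_succ a (n + 1), hcard]
  push_cast
  field_simp

/-- The centre of symmetry of the values of the discrepancy of `rootAngles a n` at its own points.
It is not `0` for even `n`, where the angle `0` occurs. -/
noncomputable def spectralCenter (n : ℕ) : ℝ := if Even n then -1 / 2 else 0

lemma spectralCenter_succ (n : ℕ) : spectralCenter (n + 1) = -1 / 2 - spectralCenter n := by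
  by_cases hn : Even n <;> simp [spectralCenter, Nat.even_add_one, hn]

lemma spectralCenter_eq {k : ℕ} (hk : k = 1 ∨ k = 2) (hkn : k % 2 = n % 2) :
    spectralCenter n = (1 - k) / 2 := by
  rcases hk with rfl | rfl
  · have hn : ¬Even n := by rw [Nat.even_iff]; omega
    simp [spectralCenter, hn]
  · have hn : Even n := by rw [Nat.even_iff]; omega
    norm_num [spectralCenter, hn]

variable {R : Type*} [CommRing R]

lemma sum_grid_succ_mul_halfDiff (T : AddChar ℝ R) (h : rr' a (n + 1) ≠ 0) :
    (∑ g ∈ grid (rr' a (n + 1)), T (discrepancy (rootAngles a (n + 1)) g)) * halfDiff T (ww a n) =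
      (∑ g ∈ grid (rr' a n), T⁻¹ (discrepancy (rootAngles a n) g)) *
        (T ((1 - a n) * ww a n / 2) * halfDiff T (a n * ww a n)) := by
  have ha : a n ≠ 0 := right_ne_zero_of_mul (rr'_succ a n ▸ h)
  have hw := ww_eq_card_div (rr'_ne_zero_of_le h n.le_succ)
  rw [rr'_succ, Nat.cast_mul] at hw
  rw [rootAngles_succ, rr'_succ, sum_discrepancy_grid_mul_sdiff T ha (rootAngles_subset a n), ← hw,
    mul_assoc, sum_range_inv_mul_halfDiff]

lemma sum_grid_one_mul_halfDiff (T : AddChar ℝ R) (h : rr' a 1 ≠ 0) :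
    (∑ g ∈ grid (rr' a 1), T (discrepancy (rootAngles a 1) g)) * halfDiff T (ww a 0) =
      T (spectralCenter 1 + ww a 0 / 2) * halfDiff T 1 := by
  have ha : a 0 ≠ 0 := right_ne_zero_of_mul (rr'_succ a 0 ▸ h)
  have hstep := sum_grid_succ_mul_halfDiff T h
  have hw := mul_ww_zero ha
  have hexp : (1 / 2 : ℝ) + (1 - a 0) * ww a 0 / 2 = spectralCenter 1 + ww a 0 / 2 := by
    rw [spectralCenter, if_neg (by decide)]
    linear_combination -hw / 2
  have hbase : ∑ g ∈ grid (rr' a 0), T⁻¹ (discrepancy (rootAngles a 0) g) = T (1 / 2) := by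
    norm_num [rr', grid, rootAngles_zero, discrepancy, filter_singleton]
  rw [hstep, hbase, hw, ← mul_assoc, ← AddChar.map_add_eq_mul, hexp]

lemma sum_grid_mul_prod_halfDiff (T : AddChar ℝ R) (h : rr' a (n + 1) ≠ 0) :
    (∑ g ∈ grid (rr' a (n + 1)), T (discrepancy (rootAngles a (n + 1)) g)) *
        ∏ i ∈ range (n + 1), halfDiff T (ww a i) =
      T (spectralCenter (n + 1) + ww a n / 2) *
        (halfDiff T 1 * ∏ i ∈ range n, halfDiff T (1 - ww a i)) := by
  induction n generalizing T with
  | zero => simpa using sum_grid_one_mul_halfDiff T h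
  | succ n ih =>
    have h₁ := rr'_ne_zero_of_le h (n + 1).le_succ
    have hstep := sum_grid_succ_mul_halfDiff T h
    have hw := mul_ww_succ_s19 h
    have hinv := ih T⁻¹ h₁
    rw [prod_halfDiff_inv, prod_halfDiff_inv, halfDiff_inv, AddChar.inv_apply] at hinv
    have hinv' : (∑ g ∈ grid (rr' a (n + 1)), T⁻¹ (discrepancy (rootAngles a (n + 1)) g)) *
        ∏ i ∈ range (n + 1), halfDiff T (ww a i) =
          T (-(spectralCenter (n + 1) + ww a n / 2)) *
            (halfDiff T 1 * ∏ i ∈ range n, halfDiff T (1 - ww a i)) := by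
      refine (isUnit_neg_one.pow (n + 1)).mul_left_cancel ?_
      linear_combination hinv
    have hexp : -(spectralCenter (n + 1) + ww a n / 2) + (1 - a (n + 1)) * ww a (n + 1) / 2 =
        spectralCenter (n + 2) + ww a (n + 1) / 2 := by
      rw [spectralCenter_succ (n + 1)]
      linear_combination -hw / 2
    rw [prod_range_succ _ (n + 1), prod_range_succ (fun i => halfDiff T (1 - ww a i)), ← hexp,
      AddChar.map_add_eq_mul]
    rw [hw] at hstep
    linear_combination (∏ i ∈ range (n + 1), halfDiff T (ww a i)) * hstep +
      T ((1 - a (n + 1)) * ww a (n + 1) / 2) * halfDiff T (1 - ww a n) * hinv'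

lemma sum_rootAngles_mul_prod_halfDiff (T : AddChar ℝ R) (h : rr' a n ≠ 0) :
    (∑ b ∈ rootAngles a n, T (discrepancy (rootAngles a n) b)) *
        ∏ i ∈ range n, halfDiff T (ww a i) =
      T (spectralCenter n) * ∏ i ∈ range n, halfDiff T (1 - ww a i) := by
  induction n generalizing T with
  | zero => norm_num [rootAngles_zero, discrepancy, spectralCenter, filter_singleton]
  | succ n ih =>
    have hsub := rootAngles_subset_succ h
    have hsplit : ∑ g ∈ grid (rr' a (n + 1)), T (discrepancy (rootAngles a (n + 1)) g) =
        ∑ b ∈ rootAngles a (n + 1), T (discrepancy (rootAngles a (n + 1)) b) +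
          ∑ b ∈ rootAngles a n, T⁻¹ (discrepancy (rootAngles a n) b) := by
      rw [← sum_sdiff hsub, ← rootAngles_succ]
      refine congrArg _ (sum_congr rfl fun b hb => ?_)
      rw [rootAngles_succ, discrepancy_grid_sdiff hsub (hsub hb), AddChar.inv_apply]
    have hinv := ih T⁻¹ (rr'_ne_zero_of_le h n.le_succ)
    rw [prod_halfDiff_inv, prod_halfDiff_inv, AddChar.inv_apply] at hinv
    have hinv' : (∑ b ∈ rootAngles a n, T⁻¹ (discrepancy (rootAngles a n) b)) *
        ∏ i ∈ range n, halfDiff T (ww a i) =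
          T (-spectralCenter n) * ∏ i ∈ range n, halfDiff T (1 - ww a i) := by
      refine (isUnit_neg_one.pow n).mul_left_cancel ?_
      linear_combination hinv
    have hgrid := sum_grid_mul_prod_halfDiff T h
    rw [hsplit, prod_range_succ, AddChar.map_add_eq_mul] at hgrid
    have hcenter : T (-spectralCenter n) = T (spectralCenter (n + 1)) * T (1 / 2) := by
      rw [spectralCenter_succ, ← AddChar.map_add_eq_mul]
      ring_nf
    rw [hcenter] at hinv'
    rw [prod_range_succ, prod_range_succ, ← mul_halfDiff_one_sub_mul_halfDiff]
    linear_combination hgrid - halfDiff T (ww a n) * hinv'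

theorem sum_rootAngles_mul_prod_sub_one (T : AddChar ℝ R) (h : rr' a n ≠ 0) :
    (∑ b ∈ rootAngles a n, T (discrepancy (rootAngles a n) b - spectralCenter n + n / 2)) *
        ∏ i ∈ range n, (T (ww a i) - 1) =
      ∏ i ∈ range n, (T 1 - T (ww a i)) := by
  have hsum : ∑ b ∈ rootAngles a n, T (discrepancy (rootAngles a n) b - spectralCenter n + n / 2) =
      T (-spectralCenter n) * T (n / 2) *
        ∑ b ∈ rootAngles a n, T (discrepancy (rootAngles a n) b) := by
    rw [mul_sum]
    refine sum_congr rfl fun b _ => ?_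
    rw [← AddChar.map_add_eq_mul, ← AddChar.map_add_eq_mul]
    ring_nf
  have hcancel : T (-spectralCenter n) * T (spectralCenter n) = 1 := by
    rw [← AddChar.map_add_eq_mul, neg_add_cancel, AddChar.map_zero_eq_one]
  rw [hsum, prod_sub_one, prod_one_sub]
  linear_combination
    T (-spectralCenter n) * T (n / 2) * (∏ i ∈ range n, T (ww a i / 2)) *
        sum_rootAngles_mul_prod_halfDiff T h +
      T (n / 2) * (∏ i ∈ range n, T (ww a i / 2)) *
        (∏ i ∈ range n, halfDiff T (1 - ww a i)) * hcancel

end ChainType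

section OrlikRandell

open Finset

/-- The point `e^(-2πib)` of the unit circle. -/
noncomputable def unitRoot (b : ℝ) : ℂ := Complex.exp (-2 * (Real.pi : ℂ) * Complex.I * (b : ℂ))

lemma X_pow_sub_one_eq_prod_grid {r : ℕ} (hr : r ≠ 0) :
    (X : ℂ[X]) ^ r - 1 = ∏ g ∈ grid r, (X - C (unitRoot g)) := by
  have hζ := (Complex.isPrimitiveRoot_exp r hr).inv
  have hpow (s : ℕ) : (Complex.exp (2 * Real.pi * Complex.I / r))⁻¹ ^ s = unitRoot (s / r) := by
    rw [← Complex.exp_neg, ← Complex.exp_nat_mul, unitRoot]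
    push_cast
    ring_nf
  rw [prod_grid, ← C_1, X_pow_sub_C_eq_prod hζ hr.bot_lt (one_pow r)]
  simp only [mul_one, hpow]

lemma map_eq_prod_rootAngles {a : ℕ → ℕ} {n : ℕ} {p : ℤ[X]} (h : rr' a n ≠ 0)
    (hp : (∏ k ∈ range (n + 1) with Odd (n - k), ((X : ℤ[X]) ^ rr' a k - 1)) * p =
      ∏ k ∈ range (n + 1) with Even (n - k), ((X : ℤ[X]) ^ rr' a k - 1)) :
    p.map (Int.castRingHom ℂ) = ∏ b ∈ rootAngles a n, (X - C (unitRoot b)) := by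
  have hfactor {k : ℕ} (hk : k ∈ range (n + 1)) :
      (X : ℂ[X]) ^ rr' a k - 1 = ∏ g ∈ grid (rr' a k), (X - C (unitRoot g)) :=
    X_pow_sub_one_eq_prod_grid (rr'_ne_zero_of_le h (mem_range_succ_iff.1 hk))
  have hgrid : ∀ i < n, grid (rr' a i) ⊆ grid (rr' a (i + 1)) := fun i hi =>
    grid_rr'_subset_succ (rr'_ne_zero_of_le h hi)
  have hpC := congrArg (Polynomial.map (Int.castRingHom ℂ)) hp
  simp only [Polynomial.map_mul, Polynomial.map_prod, Polynomial.map_sub, Polynomial.map_pow,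
    map_X, Polynomial.map_one] at hpC
  rw [prod_congr rfl fun k hk => hfactor (mem_filter.1 hk).1,
    prod_congr rfl fun k hk => hfactor (mem_filter.1 hk).1,
    prod_even_eq_prod_odd_mul_prod_alternatingDiff (G := fun i => grid (rr' a i)) hgrid] at hpC
  refine mul_left_cancel₀ (prod_ne_zero_iff.2 fun k _ => ?_) hpC
  exact prod_ne_zero_iff.2 fun g _ => X_sub_C_ne_zero _

lemma isRoot_unitRoot {a : ℕ → ℕ} {n : ℕ} {p : ℤ[X]} (h : rr' a n ≠ 0)
    (hp : (∏ k ∈ range (n + 1) with Odd (n - k), ((X : ℤ[X]) ^ rr' a k - 1)) * p =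
      ∏ k ∈ range (n + 1) with Even (n - k), ((X : ℤ[X]) ^ rr' a k - 1))
    {b : ℝ} (hb : b ∈ rootAngles a n) : (p.map (Int.castRingHom ℂ)).IsRoot (unitRoot b) := by
  rw [map_eq_prod_rootAngles h hp, IsRoot.def, eval_prod]
  exact prod_eq_zero hb (by simp)

end OrlikRandell

/-- Theorem 7.6: for a chain type singularity, the spectral numbers `α_j` of the
Orlik–Randell HOR-polynomial `p` satisfy, in the group algebra `ℤ[ℝ]` (basis
elements `t^q = single q 1`), the identity
`(Σ_j t^{α_j + (m-1)/2 + 1}) ∏_k (t^{w_k} - 1) = ∏_k (t - t^{w_k})`, i.e.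
`Sp(S) = Sp(f) - (m-1)/2`. -/
theorem stmt19 (m : ℕ) (a : ℕ → ℕ) (ha0 : 2 ≤ a 0)
    (ha : ∀ j, 1 ≤ j → j ≤ m → 1 ≤ a j)
    (k₀ : ℕ) (hk₀ : k₀ = 1 ∨ k₀ = 2) (hk₀m : k₀ % 2 = (m + 1) % 2)
    (μ : ℕ) (hμ : (μ : ℤ) = mu a m)
    (p : Polynomial ℤ)
    (hp : (∏ k ∈ (Finset.range (m + 2)).filter (fun k => Odd (m + 1 - k)),
        ((X : Polynomial ℤ) ^ (rr' a k) - 1)) * p =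
      (∏ k ∈ (Finset.range (m + 2)).filter (fun k => Even (m + 1 - k)),
        ((X : Polynomial ℤ) ^ (rr' a k) - 1)))
    (β : Fin μ → ℝ) (hmono : StrictMono β) (hIco : ∀ j, β j ∈ Set.Ico (0 : ℝ) 1)
    (hroot : ∀ j : Fin μ,
      (p.map (Int.castRingHom ℂ)).IsRoot
        (Complex.exp (-2 * (Real.pi : ℂ) * Complex.I * (β j : ℂ))))
    (hall : ∀ b : ℝ, b ∈ Set.Ico (0 : ℝ) 1 →
      (p.map (Int.castRingHom ℂ)).IsRoot
        (Complex.exp (-2 * (Real.pi : ℂ) * Complex.I * (b : ℂ))) →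
      ∃ j : Fin μ, β j = b)
    (α : Fin μ → ℝ)
    (hα : ∀ j : Fin μ, α j = (μ : ℝ) * β j - ((j : ℕ) + 1) + (k₀ : ℝ) / 2) :
    (∑ j : Fin μ,
        (AddMonoidAlgebra.single (α j + ((m : ℝ) - 1) / 2 + 1) 1 : AddMonoidAlgebra ℤ ℝ)) *
      (∏ k ∈ Finset.range (m + 1),
        ((AddMonoidAlgebra.single ((ww a k : ℝ)) 1 : AddMonoidAlgebra ℤ ℝ) -
          AddMonoidAlgebra.single 0 1)) =
    ∏ k ∈ Finset.range (m + 1),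
      ((AddMonoidAlgebra.single (1 : ℝ) 1 : AddMonoidAlgebra ℤ ℝ) -
        AddMonoidAlgebra.single ((ww a k : ℝ)) 1) := by
  have hr : rr' a (m + 1) ≠ 0 := rr'_ne_zero fun j hj => by
    rcases j.eq_zero_or_pos with rfl | hj₀
    · omega
    · exact Nat.one_le_iff_ne_zero.1 (ha j hj₀ (Nat.lt_succ_iff.1 hj))
  have hβ : rootAngles a (m + 1) = Finset.univ.image β := by
    refine Finset.eq_of_subset_of_card_le (fun b hb => ?_) ?_
    · have hb' := grid_subset_Ico _ (rootAngles_subset a _ hb)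
      simpa using hall b hb' (isRoot_unitRoot hr hp hb)
    · have hcard := card_rootAngles_succ_eq_mu hr
      rw [Finset.card_image_of_injective _ hmono.injective, Finset.card_fin]
      omega
  have hexp (j : Fin μ) : α j + ((m : ℝ) - 1) / 2 + 1 =
      discrepancy (rootAngles a (m + 1)) (β j) - spectralCenter (m + 1) + (m + 1 : ℕ) / 2 := by
    rw [hα, hβ, discrepancy_image_univ hmono, spectralCenter_eq hk₀ hk₀m]
    push_cast
    ring
  let t : AddChar ℝ (AddMonoidAlgebra ℤ ℝ) :=
    AddChar.toMonoidHomEquiv.symm (AddMonoidAlgebra.of ℤ ℝ)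
  have key := sum_rootAngles_mul_prod_sub_one t hr
  rw [Finset.sum_congr hβ fun _ _ => rfl, Finset.sum_image hmono.injective.injOn,
    ← Finset.sum_congr rfl fun j _ => congrArg t (hexp j)] at key
  exact key
end
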